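/- arXiv:math/0008132 — 2 statements merged into one kernel-verified Lean document; each statement's English description precedes it below -/
import Mathlib

section
/- For all distinct b₁, b₂ ∈ B, the difference d = b₁ − b₂ satisfies at least one of: (i) 5 divides d and 25 does not divide d; (ii) 3 divides d and 9 does not divide d; (iii) 2 divides d and 4 does not divide d. Consequently, for all distinct b₁, b₂ ∈ B one has Σ_{a ∈ A} e^{2πi (b₁ − b₂) a / 900} = 0. -/
/-- The set `A = {0,36,72,108,144} ⊕ {0,100,200} ⊕ {0,225}` of 30 integers. -/
def tijA : Finset ℤ :=
  (Finset.range 5 ×ˢ Finset.range 3 ×ˢ Finset.range 2).image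
    (fun p => 36 * (p.1 : ℤ) + 100 * (p.2.1 : ℤ) + 225 * (p.2.2 : ℤ))

/-- The explicit 30-element set `B`. -/
def tijB : Finset ℤ :=
  {0, 30, 60, 126, 180, 210, 220, 240, 300, 306,
   330, 360, 375, 390, 480, 486, 510, 520, 540, 570,
   660, 666, 690, 750, 780, 820, 825, 840, 846, 870}

/-!
With `ζ = e^{2πi/900}` and `d = b₁ - b₂`, the direct-sum structure of `A` factors `∑_{a ∈ A} ζ^{da}`
into geometric sums of lengths 5, 3 and 2 with ratios `ζ^{36d}`, `ζ^{100d}` and `ζ^{225d}`. These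
ratios are `e^{2πid/25}`, `e^{2πid/9}` and `e^{2πid/4}`, so for `p = 5, 3, 2` the sum of length `p`
vanishes as soon as `p ∣ d` and `p² ∤ d`.
-/

section Field

open Finset

variable {K : Type*} [Field K] {ζ : K}

lemma geom_sum_zpow_eq_zero_of_isPrimitiveRoot {N : ℕ} (hζ : IsPrimitiveRoot ζ N) {m : ℤ} {n : ℕ}
    (hm : ¬(N : ℤ) ∣ m) (hmn : (N : ℤ) ∣ m * n) : ∑ i ∈ range n, (ζ ^ m) ^ i = 0 := by
  have ratio_ne_one : ζ ^ m ≠ 1 := fun h ↦ hm ((hζ.zpow_eq_one_iff_dvd m).mp h)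
  have ratio_pow_eq_one : (ζ ^ m) ^ n = 1 := by
    rw [← zpow_natCast, ← zpow_mul, hζ.zpow_eq_one_iff_dvd]
    exact hmn
  rw [geom_sum_eq ratio_ne_one, ratio_pow_eq_one, sub_self, zero_div]

lemma sum_product_range_zpow {x : K} (hx : x ≠ 0) (a b c : ℤ) (l m n : ℕ) :
    ∑ p ∈ range l ×ˢ range m ×ˢ range n, x ^ (a * (p.1 : ℤ) + b * (p.2.1 : ℤ) + c * (p.2.2 : ℤ)) =
      (∑ i ∈ range l, (x ^ a) ^ i) *
        ((∑ j ∈ range m, (x ^ b) ^ j) * ∑ k ∈ range n, (x ^ c) ^ k) := by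
  simp only [sum_mul_sum, ← sum_product', zpow_add₀ hx, zpow_mul, zpow_natCast, mul_assoc]

lemma injOn_tijA_parametrization :
    Set.InjOn (fun p : ℕ × ℕ × ℕ ↦ 36 * (p.1 : ℤ) + 100 * (p.2.1 : ℤ) + 225 * (p.2.2 : ℤ))
      (range 5 ×ˢ range 3 ×ˢ range 2 : Finset (ℕ × ℕ × ℕ)) := by
  rintro ⟨i, j, k⟩ h ⟨i', j', k'⟩ h' heq
  simp only [mem_coe, mem_product, mem_range] at h h' heq
  simp only [Prod.mk.injEq]
  omega

lemma sum_tijA_zpow {x : K} (hx : x ≠ 0) :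
    ∑ a ∈ tijA, x ^ a =
      (∑ i ∈ range 5, (x ^ (36 : ℤ)) ^ i) *
        ((∑ j ∈ range 3, (x ^ (100 : ℤ)) ^ j) * ∑ k ∈ range 2, (x ^ (225 : ℤ)) ^ k) := by
  rw [tijA, sum_image injOn_tijA_parametrization, sum_product_range_zpow hx]

lemma sum_tijA_zpow_mul_eq_zero (hζ : IsPrimitiveRoot ζ 900) {d : ℤ}
    (hd : (5 ∣ d ∧ ¬25 ∣ d) ∨ (3 ∣ d ∧ ¬9 ∣ d) ∨ (2 ∣ d ∧ ¬4 ∣ d)) :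
    ∑ a ∈ tijA, ζ ^ (d * a) = 0 := by
  have hζd : ζ ^ d ≠ 0 := zpow_ne_zero d (hζ.ne_zero (by norm_num))
  simp only [zpow_mul, sum_tijA_zpow hζd, mul_eq_zero]
  simp only [← zpow_mul]
  refine hd.imp ?_ (Or.imp ?_ ?_) <;> rintro ⟨hdvd, hndvd⟩ <;>
    exact geom_sum_zpow_eq_zero_of_isPrimitiveRoot hζ (by omega) (by omega)

end Field

lemma dvd_sub_and_not_sq_dvd_sub_of_mem_tijB : ∀ b₁ ∈ tijB, ∀ b₂ ∈ tijB, b₁ ≠ b₂ →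
    ((5 ∣ b₁ - b₂ ∧ ¬(25 ∣ b₁ - b₂)) ∨ (3 ∣ b₁ - b₂ ∧ ¬(9 ∣ b₁ - b₂)) ∨
      (2 ∣ b₁ - b₂ ∧ ¬(4 ∣ b₁ - b₂))) := by
  decide +kernel

lemma exp_two_pi_I_div_zpow (N : ℂ) (m : ℤ) :
    Complex.exp (2 * Real.pi * Complex.I / N) ^ m =
      Complex.exp (2 * Real.pi * Complex.I * m / N) := by
  rw [← Complex.exp_int_mul]
  ring_nf

theorem stmt5_general {K : Type*} [Field K] {ζ : K} (hζ : IsPrimitiveRoot ζ 900) :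
    ∀ b₁ ∈ tijB, ∀ b₂ ∈ tijB, b₁ ≠ b₂ →
      ((5 ∣ b₁ - b₂ ∧ ¬(25 ∣ b₁ - b₂)) ∨ (3 ∣ b₁ - b₂ ∧ ¬(9 ∣ b₁ - b₂)) ∨
        (2 ∣ b₁ - b₂ ∧ ¬(4 ∣ b₁ - b₂))) ∧
      ∑ a ∈ tijA, ζ ^ ((b₁ - b₂) * a) = 0 := by
  intro b₁ hb₁ b₂ hb₂ hne
  have hd := dvd_sub_and_not_sq_dvd_sub_of_mem_tijB b₁ hb₁ b₂ hb₂ hne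
  exact ⟨hd, sum_tijA_zpow_mul_eq_zero hζ hd⟩

/-- For all distinct `b₁, b₂ ∈ B`, the difference `d = b₁ - b₂` satisfies at least one of:
(i) `5 ∣ d` and `25 ∤ d`; (ii) `3 ∣ d` and `9 ∤ d`; (iii) `2 ∣ d` and `4 ∤ d`.
Consequently `Σ_{a ∈ A} e^{2πi (b₁ - b₂) a / 900} = 0`. -/
theorem stmt5 : ∀ b₁ ∈ tijB, ∀ b₂ ∈ tijB, b₁ ≠ b₂ →
    ((5 ∣ b₁ - b₂ ∧ ¬(25 ∣ b₁ - b₂)) ∨ (3 ∣ b₁ - b₂ ∧ ¬(9 ∣ b₁ - b₂)) ∨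
      (2 ∣ b₁ - b₂ ∧ ¬(4 ∣ b₁ - b₂))) ∧
    (∑ a ∈ tijA, Complex.exp (2 * Real.pi * Complex.I * (b₁ - b₂) * a / 900)) = 0 := by
  simpa only [exp_two_pi_I_div_zpow, Int.cast_mul, Int.cast_sub, Nat.cast_ofNat, ← mul_assoc]
    using stmt5_general (Complex.isPrimitiveRoot_exp 900 (by norm_num))
end

section
/- Let 𝒯_A = ℤ + (1/900)A ⊆ ℝ. Then Λ_A = 900ℤ + A is a universal spectrum for 𝒯_A: every measurable set Ω ⊆ ℝ of finite positive Lebesgue measure that tiles ℝ by the translation set 𝒯_A has Λ_A as a spectrum. -/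
open MeasureTheory

/-- `Ω` tiles `ℝ` by the translation set `T`: the translates `Ω + t`, `t ∈ T`, cover
`ℝ` up to a Lebesgue-null set, and distinct translates intersect in null sets. -/
def Tiles1 (Ω : Set ℝ) (T : Set ℝ) : Prop :=
  volume (Set.univ \ ⋃ t ∈ T, (fun x => x + t) '' Ω) = 0 ∧
  ∀ t ∈ T, ∀ t' ∈ T, t ≠ t' →
    volume (((fun x => x + t) '' Ω) ∩ ((fun x => x + t') '' Ω)) = 0

/-- `Λ` is a spectrum for `Ω ⊆ ℝ`: the exponentials `x ↦ e^{2πiλx}`, `λ ∈ Λ`, regarded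
as elements of `L²` of Lebesgue measure restricted to `Ω`, are pairwise orthogonal and
their linear span is dense. -/
def IsSpectrum1 (Ω : Set ℝ) (Λ : Set ℝ) : Prop :=
  (∀ l₁ ∈ Λ, ∀ l₂ ∈ Λ, l₁ ≠ l₂ →
    ∫ x in Ω, Complex.exp (2 * Real.pi * Complex.I * (l₁ : ℂ) * (x : ℂ)) *
      (starRingEnd ℂ) (Complex.exp (2 * Real.pi * Complex.I * (l₂ : ℂ) * (x : ℂ))) = 0) ∧
  (Submodule.span ℂ {f : Lp ℂ 2 (volume.restrict Ω) |
      ∃ l ∈ Λ, ∀ᵐ x ∂(volume.restrict Ω),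
        f x = Complex.exp (2 * Real.pi * Complex.I * (l : ℂ) * (x : ℂ))}).topologicalClosure
    = ⊤

/-!
A tiling of `ℝ` by `ℤ + A / N` turns `⋃ a, (Ω + a / N)` into a fundamental domain of `ℤ`, whence
`A(e^{-2πin/N}) · 𝓕 1_Ω (n) = 0` for every nonzero integer `n`, where `A(z) = ∑ z ^ a` is the mask
polynomial; moreover `|A| · |Ω| = 1`. If `A(z)` has no zero at `e^{2πi(b - b')/N}` for `b, b' ∈ B`,
the exponentials with frequencies in `Λ = Nℤ + B` are therefore orthogonal on `Ω`.

Completeness is a density count. Bessel's inequality reads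
`∑ λ ∈ Λ, |𝓕 1_Ω (ξ - λ)| ^ 2 ≤ |Ω| ^ 2` for every `ξ`. By Plancherel the integral of the left side
over a period of length `N` is `|B| · |Ω|`, which equals `N |Ω| ^ 2` as soon as `|A| · |B| = N`. So
equality holds for almost every `ξ`, that is, `e_ξ` lies in the closed span of `{e_λ}`; a function
orthogonal to this span has an almost everywhere vanishing Fourier transform.

For `A = B = tijA` and `N = 900 = 2² · 3² · 5²` the mask polynomial is
`Φ₅(z ^ 36) Φ₃(z ^ 100) Φ₂(z ^ 225)`, and its nonvanishing on differences is a divisibility check.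
-/

open scoped FourierTransform ENNReal SchwartzMap

section Plancherel

variable {E F : Type*} [NormedAddCommGroup E] [InnerProductSpace ℝ E] [FiniteDimensional ℝ E]
  [MeasurableSpace E] [BorelSpace E] [NormedAddCommGroup F] [InnerProductSpace ℂ F]
  {f : E → F}

lemma continuous_fourier_of_integrable (hf : Integrable f) : Continuous (𝓕 f) :=
  VectorFourier.fourierIntegral_continuous Real.continuous_fourierChar continuous_inner hf

variable [CompleteSpace F]

lemma integral_schwartz_smul_fourier_toLp (hf : Integrable f) (hf₂ : MemLp f 2) (φ : 𝓢(E, ℂ)) :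
    ∫ ξ, φ ξ • (𝓕 (hf₂.toLp f) : Lp F 2 volume) ξ = ∫ ξ, φ ξ • 𝓕 f ξ :=
  calc ∫ ξ, φ ξ • (𝓕 (hf₂.toLp f) : Lp F 2 volume) ξ
      = ∫ x, 𝓕 φ x • hf₂.toLp f x := by
        rw [← Lp.toTemperedDistribution_apply, ← Lp.fourier_toTemperedDistribution_eq,
          TemperedDistribution.fourier_apply, Lp.toTemperedDistribution_apply]
    _ = ∫ x, 𝓕 (φ : E → ℂ) x • f x := by
        refine integral_congr_ae ?_
        filter_upwards [hf₂.coeFn_toLp] with x hx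
        rw [hx, SchwartzMap.fourier_coe]
    _ = ∫ ξ, φ ξ • 𝓕 f ξ := by
        have h := VectorFourier.integral_fourierIntegral_smul_eq_flip (L := innerₗ E)
          Real.continuous_fourierChar continuous_inner (φ.integrable (μ := volume)) hf
        rwa [flip_innerₗ] at h

theorem fourier_toLp_ae_eq (hf : Integrable f) (hf₂ : MemLp f 2) :
    (𝓕 (hf₂.toLp f) : Lp F 2 volume) =ᵐ[volume] 𝓕 f := by
  refine ae_eq_of_integral_contDiff_smul_eq
    ((Lp.memLp _).locallyIntegrable one_le_two)
    (continuous_fourier_of_integrable hf).locallyIntegrable fun g hg hg_supp => ?_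
  let φ : 𝓢(E, ℂ) := (hg_supp.comp_left (g := ((↑) : ℝ → ℂ)) Complex.ofReal_zero).toSchwartzMap
    (Complex.ofRealCLM.contDiff.comp hg)
  have hφ : ∀ (ξ : E) (y : F), φ ξ • y = g ξ • y := fun ξ y => Complex.coe_smul (g ξ) y
  simpa only [hφ] using integral_schwartz_smul_fourier_toLp hf hf₂ φ

theorem lintegral_enorm_fourier_sq (hf : Integrable f) (hf₂ : MemLp f 2) :
    ∫⁻ ξ, ‖𝓕 f ξ‖ₑ ^ 2 = ∫⁻ x, ‖f x‖ₑ ^ 2 := by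
  have hnorm : eLpNorm (𝓕 f) 2 volume = eLpNorm f 2 volume := by
    rw [← eLpNorm_congr_ae (fourier_toLp_ae_eq hf hf₂), ← eLpNorm_congr_ae hf₂.coeFn_toLp,
      ← Lp.enorm_def, ← Lp.enorm_def, ← ofReal_norm, ← ofReal_norm, Lp.norm_fourier_eq]
  have hpow : ∀ g : E → F, ∫⁻ x, ‖g x‖ₑ ^ 2 = eLpNorm g 2 volume ^ (2 : ℝ) := fun g => by
    simpa using (eLpNorm_nnreal_pow_eq_lintegral (f := g) (p := 2) (μ := volume) two_ne_zero).symm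
  rw [hpow, hpow, hnorm]

theorem ae_eq_zero_of_fourier_ae_eq_zero (hf : Integrable f) (hf₂ : MemLp f 2)
    (h : 𝓕 f =ᵐ[volume] 0) : f =ᵐ[volume] 0 := by
  have hLp : (𝓕 (hf₂.toLp f) : Lp F 2 volume) = 0 :=
    (Lp.eq_zero_iff_ae_eq_zero).2 ((fourier_toLp_ae_eq hf hf₂).trans h)
  have : hf₂.toLp f = 0 := by
    rw [← norm_eq_zero, ← Lp.norm_fourier_eq, hLp, norm_zero]
  exact hf₂.coeFn_toLp.symm.trans ((Lp.eq_zero_iff_ae_eq_zero).1 this)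

end Plancherel

section Bessel

variable {𝕜 H ι : Type*} [RCLike 𝕜] [NormedAddCommGroup H] [InnerProductSpace 𝕜 H]

variable {v : ι → H} {m : ℝ}

theorem tsum_enorm_inner_sq_le_of_orthonormal (hv : Orthonormal 𝕜 v) (x : H) :
    ∑' i, ‖inner 𝕜 (v i) x‖ₑ ^ 2 ≤ ‖x‖ₑ ^ 2 := by
  have hsum := ENNReal.ofReal_tsum_of_nonneg (fun _ => by positivity) (hv.inner_products_summable x)
  simp only [ENNReal.ofReal_pow (norm_nonneg _), ofReal_norm] at hsum
  rw [← hsum, ← ofReal_norm, ← ENNReal.ofReal_pow (norm_nonneg _)]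
  exact ENNReal.ofReal_le_ofReal (hv.tsum_inner_products_le x)

theorem tsum_enorm_inner_sq_le (horth : Pairwise fun i j => inner 𝕜 (v i) (v j) = 0)
    (hnorm : ∀ i, ‖v i‖ ^ 2 = m) (hm : 0 < m) (x : H) :
    ∑' i, ‖inner 𝕜 (v i) x‖ₑ ^ 2 ≤ ENNReal.ofReal m * ‖x‖ₑ ^ 2 := by
  have hscale : (0 : ℝ) < (√m)⁻¹ := by positivity
  have horthonormal : Orthonormal 𝕜 fun i => (((√m)⁻¹ : ℝ) : 𝕜) • v i := by
    refine ⟨fun i => ?_, fun i j hij => ?_⟩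
    · rw [norm_smul, RCLike.norm_ofReal, abs_of_pos hscale, ← hnorm i, Real.sqrt_sq (norm_nonneg _)]
      exact inv_mul_cancel₀ fun h => by simp [← hnorm i, h] at hm
    · simp only [inner_smul_left, inner_smul_right, horth hij, mul_zero]
  have hterm : ∀ i, ‖inner 𝕜 ((((√m)⁻¹ : ℝ) : 𝕜) • v i) x‖ₑ ^ 2 =
      (ENNReal.ofReal m)⁻¹ * ‖inner 𝕜 (v i) x‖ₑ ^ 2 := fun i => by
    rw [inner_smul_left, RCLike.conj_ofReal, enorm_mul, mul_pow, ← ofReal_norm (_ : 𝕜),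
      RCLike.norm_ofReal, abs_of_pos hscale, ← ENNReal.ofReal_pow hscale.le, inv_pow,
      Real.sq_sqrt hm.le, ENNReal.ofReal_inv_of_pos hm]
  have hbessel := tsum_enorm_inner_sq_le_of_orthonormal horthonormal x
  simp only [hterm, ENNReal.tsum_mul_left] at hbessel
  rwa [mul_comm, ← div_eq_mul_inv,
    ENNReal.div_le_iff' (by simpa using hm) ENNReal.ofReal_ne_top] at hbessel

theorem mem_topologicalClosure_span_of_le_tsum [CompleteSpace H]
    (horth : Pairwise fun i j => inner 𝕜 (v i) (v j) = 0)
    (hnorm : ∀ i, ‖v i‖ ^ 2 = m) (hm : 0 < m) {x : H}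
    (hx : ENNReal.ofReal m * ‖x‖ₑ ^ 2 ≤ ∑' i, ‖inner 𝕜 (v i) x‖ₑ ^ 2) :
    x ∈ (Submodule.span 𝕜 (Set.range v)).topologicalClosure := by
  set K := (Submodule.span 𝕜 (Set.range v)).topologicalClosure
  have hmem : ∀ i, v i ∈ K := fun i =>
    Submodule.le_topologicalClosure _ (Submodule.subset_span ⟨i, rfl⟩)
  have hinner : ∀ i, inner 𝕜 (v i) (K.starProjection x) = inner 𝕜 (v i) x := fun i => by
    rw [← Submodule.inner_starProjection_left_eq_right,
      Submodule.starProjection_eq_self_iff.2 (hmem i)]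
  have hle : ENNReal.ofReal m * ‖x‖ₑ ^ 2 ≤ ENNReal.ofReal m * ‖K.starProjection x‖ₑ ^ 2 := by
    refine hx.trans ?_
    simpa only [hinner] using tsum_enorm_inner_sq_le horth hnorm hm (K.starProjection x)
  rw [ENNReal.mul_le_mul_iff_right (by simpa using hm) ENNReal.ofReal_ne_top,
    ENNReal.pow_le_pow_left_iff two_ne_zero] at hle
  rw [K.mem_iff_norm_starProjection]
  exact (K.norm_starProjection_apply_le x).antisymm (enorm_le_iff_norm_le.1 hle)

end Bessel

section Periodization

variable {V ι : Type*} [AddCommGroup V] [MeasurableSpace V] [MeasurableAdd V] {μ : Measure V}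
  [μ.IsAddLeftInvariant] {G : AddSubgroup V} [Countable G] {D : Set V} [Fintype ι]

theorem setLIntegral_tsum_sub_eq (hD : IsAddFundamentalDomain G D μ) {φ : V → ℝ≥0∞}
    (hφ : Measurable φ) (a : ι → V) :
    ∫⁻ x in D, ∑' p : G × ι, φ (x - (p.1 + a p.2)) ∂μ = Fintype.card ι * ∫⁻ x, φ x ∂μ :=
  calc ∫⁻ x in D, ∑' p : G × ι, φ (x - (p.1 + a p.2)) ∂μ
      = ∑' p : G × ι, ∫⁻ x in D, φ (x - (p.1 + a p.2)) ∂μ :=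
        lintegral_tsum fun p => by
          simp only [sub_eq_add_neg]
          exact (hφ.comp (measurable_add_const _)).aemeasurable
    _ = ∑ i, ∑' g : G, ∫⁻ x in D, φ ((-g +ᵥ x) - a i) ∂μ := by
        rw [ENNReal.tsum_prod', ENNReal.tsum_comm, tsum_fintype]
        refine Finset.sum_congr rfl fun i _ => tsum_congr fun g =>
          lintegral_congr fun x => congrArg φ ?_
        rw [AddSubgroup.vadd_def, vadd_eq_add, AddSubgroup.coe_neg]
        abel
    _ = ∑ i, ∫⁻ x, φ (x - a i) ∂μ := by
        simp only [hD.lintegral_eq_tsum' fun x => φ (x - a _)]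
    _ = Fintype.card ι * ∫⁻ x, φ x ∂μ := by
        simp only [sub_eq_add_neg, lintegral_add_right_eq_self, Finset.sum_const, nsmul_eq_mul,
          Finset.card_univ]

end Periodization

section Exponentials

open scoped ComplexInnerProductSpace

theorem fourier_indicator {F : Type*} [NormedAddCommGroup F] [NormedSpace ℂ F] {Ω : Set ℝ}
    (hΩ : MeasurableSet Ω) (f : ℝ → F) (ξ : ℝ) :
    𝓕 (Ω.indicator f) ξ = ∫ x in Ω, (𝐞 (-(x * ξ)) : ℂ) • f x := by
  rw [Real.fourier_real_eq, ← integral_indicator hΩ]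
  refine integral_congr_ae (.of_forall fun x => ?_)
  by_cases hx : x ∈ Ω <;> simp [hx, Circle.smul_def]

variable {Ω : Set ℝ} [IsFiniteMeasure (volume.restrict Ω)]

theorem lintegral_enorm_fourier_indicator_one_sq (hΩ : MeasurableSet Ω) :
    ∫⁻ ξ, ‖𝓕 (Ω.indicator fun _ => (1 : ℂ)) ξ‖ₑ ^ 2 = volume Ω := by
  have hint : Integrable (Ω.indicator fun _ => (1 : ℂ)) :=
    (integrable_indicator_iff hΩ).2 (integrable_const 1)
  rw [lintegral_enorm_fourier_sq hint ((memLp_indicator_iff_restrict hΩ).2 (memLp_const 1)),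
    ← setLIntegral_one, ← lintegral_indicator hΩ]
  refine lintegral_congr fun x => ?_
  by_cases hx : x ∈ Ω <;> simp [hx]

variable (Ω) in
/-- The exponential `x ↦ e^{2πiξx}` as an element of `L²(Ω)`. -/
noncomputable def expLp (ξ : ℝ) : Lp ℂ 2 (volume.restrict Ω) :=
  MemLp.toLp (fun x => (𝐞 (ξ * x) : ℂ)) <| MemLp.of_bound (C := 1)
    (by fun_prop) (.of_forall fun _ => (Circle.norm_coe _).le)

variable (Ω) in
theorem coeFn_expLp (ξ : ℝ) : expLp Ω ξ =ᵐ[volume.restrict Ω] fun x => (𝐞 (ξ * x) : ℂ) :=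
  MemLp.coeFn_toLp _

theorem inner_expLp_left (hΩ : MeasurableSet Ω) (ξ : ℝ) (g : Lp ℂ 2 (volume.restrict Ω)) :
    ⟪expLp Ω ξ, g⟫ = 𝓕 (Ω.indicator g) ξ := by
  rw [L2.inner_def, fourier_indicator hΩ]
  refine integral_congr_ae ?_
  filter_upwards [coeFn_expLp Ω ξ] with x hx
  rw [hx, RCLike.inner_apply, mul_comm ξ x, AddChar.map_neg_eq_inv, Circle.coe_inv_eq_conj,
    smul_eq_mul, mul_comm]

theorem inner_expLp_expLp (hΩ : MeasurableSet Ω) (ξ η : ℝ) :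
    ⟪expLp Ω ξ, expLp Ω η⟫ = 𝓕 (Ω.indicator fun _ => (1 : ℂ)) (ξ - η) := by
  rw [inner_expLp_left hΩ, fourier_indicator hΩ, fourier_indicator hΩ]
  refine integral_congr_ae ?_
  filter_upwards [coeFn_expLp Ω η] with x hx
  rw [hx, smul_eq_mul, smul_eq_mul, mul_one, ← Circle.coe_mul, ← AddChar.map_add_eq_mul]
  ring_nf

theorem norm_expLp_sq (ξ : ℝ) : ‖expLp Ω ξ‖ ^ 2 = volume.real Ω := by
  have hinner : ⟪expLp Ω ξ, expLp Ω ξ⟫ = ∫ _ in Ω, (1 : ℂ) := by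
    rw [L2.inner_def]
    refine integral_congr_ae ?_
    filter_upwards [coeFn_expLp Ω ξ] with x hx
    rw [hx, inner_self_eq_norm_sq_to_K, Circle.norm_coe]
    simp
  rw [inner_self_eq_norm_sq_to_K, setIntegral_const, Complex.real_smul, mul_one] at hinner
  exact Complex.ofReal_injective (by simpa using hinner)

theorem isSpectrum1_range {ι : Type*} {l : ι → ℝ}
    (horth : Pairwise fun i j => ⟪expLp Ω (l i), expLp Ω (l j)⟫ = 0)
    (htotal : (Submodule.span ℂ (Set.range fun i => expLp Ω (l i))).topologicalClosure = ⊤) :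
    IsSpectrum1 Ω (Set.range l) := by
  have hexp : ∀ ξ x : ℝ, Complex.exp (2 * Real.pi * Complex.I * ξ * x) = 𝐞 (ξ * x) := fun ξ x => by
    rw [Real.fourierChar_apply]
    push_cast
    ring_nf
  simp only [IsSpectrum1, hexp]
  refine ⟨?_, ?_⟩
  · rintro _ ⟨i, rfl⟩ _ ⟨j, rfl⟩ hij
    rw [← horth (ne_of_apply_ne l hij.symm), L2.inner_def]
    refine integral_congr_ae ?_
    filter_upwards [coeFn_expLp Ω (l i), coeFn_expLp Ω (l j)] with x hi hj
    rw [hi, hj, RCLike.inner_apply]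
  · rw [eq_top_iff, ← htotal]
    refine Submodule.topologicalClosure_mono (Submodule.span_mono ?_)
    rintro _ ⟨i, rfl⟩
    exact ⟨l i, ⟨i, rfl⟩, coeFn_expLp Ω (l i)⟩

variable {G : AddSubgroup ℝ} [Countable G] {D : Set ℝ} {ι : Type*} [Fintype ι] {a : ι → ℝ}

variable (a) in
theorem setLIntegral_tsum_enorm_inner_expLp_sq (hΩ : MeasurableSet Ω)
    (hD : IsAddFundamentalDomain G D volume) :
    ∫⁻ ξ in D, ∑' p : G × ι, ‖⟪expLp Ω (p.1 + a p.2), expLp Ω ξ⟫‖ₑ ^ 2 =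
      Fintype.card ι * volume Ω := by
  have hint : Integrable (Ω.indicator fun _ => (1 : ℂ)) :=
    (integrable_indicator_iff hΩ).2 (integrable_const 1)
  have hmeas : Measurable fun ξ => ‖𝓕 (Ω.indicator fun _ => (1 : ℂ)) ξ‖ₑ ^ 2 :=
    (continuous_fourier_of_integrable hint).measurable.enorm.pow_const 2
  have hsymm : ∀ ξ η, ‖⟪expLp Ω η, expLp Ω ξ⟫‖ₑ =
      ‖𝓕 (Ω.indicator fun _ => (1 : ℂ)) (ξ - η)‖ₑ := fun ξ η => by
    rw [← ofReal_norm, norm_inner_symm, ofReal_norm, inner_expLp_expLp hΩ]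
  simp only [hsymm]
  rw [setLIntegral_tsum_sub_eq hD hmeas, lintegral_enorm_fourier_indicator_one_sq hΩ]

-- By Bessel the sum of squares is at most `|Ω| ^ 2`, and both have the same integral over `D`.
theorem ae_restrict_expLp_mem_topologicalClosure_span (hΩ : MeasurableSet Ω) (hΩ₀ : volume Ω ≠ 0)
    (hD : IsAddFundamentalDomain G D volume)
    (horth : Pairwise fun p q : G × ι => ⟪expLp Ω (p.1 + a p.2), expLp Ω (q.1 + a q.2)⟫ = 0)
    (hcard : Fintype.card ι = volume D * volume Ω) :
    ∀ᵐ ξ ∂volume.restrict D, expLp Ω ξ ∈ (Submodule.span ℂ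
      (Set.range fun p : G × ι => expLp Ω (p.1 + a p.2))).topologicalClosure := by
  have hΩ_top : volume Ω ≠ ⊤ := by simpa using measure_ne_top (volume.restrict Ω) Set.univ
  have hm : 0 < volume.real Ω := ENNReal.toReal_pos hΩ₀ hΩ_top
  have hnorm : ∀ p : G × ι, ‖expLp Ω (p.1 + a p.2)‖ ^ 2 = volume.real Ω := fun _ => norm_expLp_sq _
  have hconst : ∀ ξ, ENNReal.ofReal (volume.real Ω) * ‖expLp Ω ξ‖ₑ ^ 2 = volume Ω * volume Ω :=
    fun ξ => by
      rw [← ofReal_norm, ← ENNReal.ofReal_pow (norm_nonneg _), norm_expLp_sq, ofReal_measureReal]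
  have hle : ∀ ξ, ∑' p : G × ι, ‖⟪expLp Ω (p.1 + a p.2), expLp Ω ξ⟫‖ₑ ^ 2 ≤
      volume Ω * volume Ω := fun ξ =>
    (tsum_enorm_inner_sq_le horth hnorm hm _).trans_eq (hconst ξ)
  have hlintegral := setLIntegral_tsum_enorm_inner_expLp_sq a hΩ hD
  have heq := ae_eq_of_ae_le_of_lintegral_le (μ := volume.restrict D) (.of_forall hle)
    (by rw [hlintegral]; finiteness) aemeasurable_const
    (by rw [hlintegral, setLIntegral_const, hcard]; exact le_of_eq (by ring))
  filter_upwards [heq] with ξ hξ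
  exact mem_topologicalClosure_span_of_le_tsum horth hnorm hm (by rw [hconst, hξ])

theorem ae_expLp_mem_topologicalClosure_span (hΩ : MeasurableSet Ω) (hΩ₀ : volume Ω ≠ 0)
    (hD : IsAddFundamentalDomain G D volume)
    (horth : Pairwise fun p q : G × ι => ⟪expLp Ω (p.1 + a p.2), expLp Ω (q.1 + a q.2)⟫ = 0)
    (hcard : Fintype.card ι = volume D * volume Ω) :
    ∀ᵐ ξ, expLp Ω ξ ∈ (Submodule.span ℂ
      (Set.range fun p : G × ι => expLp Ω (p.1 + a p.2))).topologicalClosure := by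
  have htranslates := (ae_restrict_iUnion_iff _ _).2 fun g : G =>
    ae_restrict_expLp_mem_topologicalClosure_span hΩ hΩ₀ (hD.vadd_of_comm g) horth
      (by rw [hcard, measure_vadd])
  rwa [Measure.restrict_congr_set hD.iUnion_vadd_ae_eq, Measure.restrict_univ] at htranslates

theorem topologicalClosure_eq_top_of_ae_expLp_mem (hΩ : MeasurableSet Ω)
    {K : Submodule ℂ (Lp ℂ 2 (volume.restrict Ω))}
    (hK : ∀ᵐ ξ, expLp Ω ξ ∈ K.topologicalClosure) : K.topologicalClosure = ⊤ := by
  rw [Submodule.topologicalClosure_eq_top_iff, Submodule.eq_bot_iff]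
  intro g hg
  have hg₂ : MemLp (Ω.indicator g) 2 := (memLp_indicator_iff_restrict hΩ).2 (Lp.memLp g)
  have hg₁ : Integrable (Ω.indicator g) :=
    (integrable_indicator_iff hΩ).2 ((Lp.memLp g).integrable one_le_two)
  have hfourier : 𝓕 (Ω.indicator g) =ᵐ[volume] 0 := by
    filter_upwards [hK] with ξ hξ
    rw [← inner_expLp_left hΩ]
    rw [← Submodule.orthogonal_closure] at hg
    exact Submodule.inner_right_of_mem_orthogonal hξ hg
  rw [Lp.eq_zero_iff_ae_eq_zero]
  exact (indicator_ae_eq_restrict hΩ).symm.trans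
    (ae_restrict_of_ae (ae_eq_zero_of_fourier_ae_eq_zero hg₁ hg₂ hfourier))

end Exponentials

section Tiling

open scoped Pointwise Function

theorem tiles1_iff {Ω T : Set ℝ} :
    Tiles1 Ω T ↔ (∀ᵐ x, ∃ t ∈ T, x ∈ t +ᵥ Ω) ∧
      T.Pairwise (AEDisjoint volume on fun t => t +ᵥ Ω) := by
  have htranslate : ∀ t : ℝ, (fun x => x + t) '' Ω = t +ᵥ Ω := fun t => by
    simp only [← Set.image_vadd, vadd_eq_add, add_comm]
  simp only [Tiles1, htranslate, ae_iff, Set.Pairwise, Function.onFun, AEDisjoint]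
  refine and_congr_left' ?_
  congr! 2
  ext x
  simp only [Set.mem_sdiff, Set.mem_univ, true_and, Set.mem_iUnion, exists_prop, Set.mem_ofPred_eq]

namespace Tiles1

variable {Ω : Set ℝ} {G : AddSubgroup ℝ} {ι : Type*} {b : ι → ℝ}

theorem pairwise_aedisjoint_vadd (hb : Function.Injective fun p : G × ι => (p.1 : ℝ) + b p.2)
    (hT : Tiles1 Ω (Set.range fun p : G × ι => (p.1 : ℝ) + b p.2)) :
    Pairwise (AEDisjoint volume on fun p : G × ι => ((p.1 : ℝ) + b p.2) +ᵥ Ω) := fun p q hpq =>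
  (tiles1_iff.1 hT).2 ⟨p, rfl⟩ ⟨q, rfl⟩ (hb.ne hpq)

theorem pairwise_aedisjoint_offset_vadd
    (hb : Function.Injective fun p : G × ι => (p.1 : ℝ) + b p.2)
    (hT : Tiles1 Ω (Set.range fun p : G × ι => (p.1 : ℝ) + b p.2)) :
    Pairwise (AEDisjoint volume on fun i => b i +ᵥ Ω) := fun i j hij => by
  simpa [Function.onFun] using
    hT.pairwise_aedisjoint_vadd hb (i := (0, i)) (j := (0, j)) (by simpa using hij)

variable [Finite ι]

theorem isAddFundamentalDomain_iUnion_vadd (hΩ : MeasurableSet Ω)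
    (hb : Function.Injective fun p : G × ι => (p.1 : ℝ) + b p.2)
    (hT : Tiles1 Ω (Set.range fun p : G × ι => (p.1 : ℝ) + b p.2)) :
    IsAddFundamentalDomain G (⋃ i, b i +ᵥ Ω) where
  nullMeasurableSet := .iUnion fun i => (hΩ.const_vadd (b i)).nullMeasurableSet
  ae_covers := by
    filter_upwards [(tiles1_iff.1 hT).1] with x hx
    obtain ⟨_, ⟨⟨g, i⟩, rfl⟩, hx⟩ := hx
    rw [Set.mem_vadd_set_iff_neg_vadd_mem] at hx
    refine ⟨-g, Set.mem_iUnion.2 ⟨i, Set.mem_vadd_set_iff_neg_vadd_mem.2 ?_⟩⟩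
    simpa [AddSubgroup.vadd_def, add_assoc, add_comm, add_left_comm] using hx
  aedisjoint g h hgh := by
    simp only [Function.onFun, Set.vadd_set_iUnion, AEDisjoint.iUnion_left_iff,
      AEDisjoint.iUnion_right_iff, AddSubgroup.vadd_def, vadd_vadd]
    exact fun i j => hT.pairwise_aedisjoint_vadd hb (i := (g, j)) (j := (h, i)) (by simp [hgh])

end Tiles1

namespace Tiles1

variable {Ω D : Set ℝ} {G : AddSubgroup ℝ} [Countable G] {ι : Type*} [Fintype ι] {b : ι → ℝ}

theorem card_mul_volume (hΩ : MeasurableSet Ω)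
    (hb : Function.Injective fun p : G × ι => (p.1 : ℝ) + b p.2)
    (hT : Tiles1 Ω (Set.range fun p : G × ι => (p.1 : ℝ) + b p.2))
    (hD : IsAddFundamentalDomain G D) : Fintype.card ι * volume Ω = volume D := by
  rw [hD.measure_eq (hT.isAddFundamentalDomain_iUnion_vadd hΩ hb),
    measure_iUnion₀ (hT.pairwise_aedisjoint_offset_vadd hb)
      fun i => (hΩ.const_vadd (b i)).nullMeasurableSet]
  simp [measure_vadd]

theorem sum_setIntegral_add {F : Type*} [NormedAddCommGroup F] [NormedSpace ℝ F] {f : ℝ → F}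
    (hΩ : MeasurableSet Ω)
    (hb : Function.Injective fun p : G × ι => (p.1 : ℝ) + b p.2)
    (hT : Tiles1 Ω (Set.range fun p : G × ι => (p.1 : ℝ) + b p.2))
    (hD : IsAddFundamentalDomain G D) (hf : ∀ (g : G) x, f (g +ᵥ x) = f x)
    (hfD : IntegrableOn f D) :
    ∑ i, ∫ x in Ω, f (b i + x) = ∫ x in D, f x := by
  have hU := hT.isAddFundamentalDomain_iUnion_vadd hΩ hb
  rw [hD.setIntegral_eq hU hf, integral_iUnion_ae
      (fun i => (hΩ.const_vadd (b i)).nullMeasurableSet) (hT.pairwise_aedisjoint_offset_vadd hb)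
      ((hD.integrableOn_iff hU hf).1 hfD), tsum_fintype]
  refine Finset.sum_congr rfl fun i _ => ?_
  exact ((measurePreserving_add_left volume (b i)).setIntegral_image_emb
    (measurableEmbedding_addLeft (b i)) f Ω).symm

end Tiles1

end Tiling

theorem fourierChar_eq_one_iff {x : ℝ} : 𝐞 x = 1 ↔ ∃ n : ℤ, (n : ℝ) = x := by
  rw [Real.fourierChar_apply', Circle.exp_eq_one]
  refine exists_congr fun n => ?_
  rw [mul_comm, mul_left_inj' Real.two_pi_pos.ne', eq_comm]

theorem fourierChar_intCast (n : ℤ) : 𝐞 (n : ℝ) = 1 :=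
  fourierChar_eq_one_iff.2 ⟨n, rfl⟩

theorem integral_Ioc_fourierChar_neg_mul_int {n : ℤ} (hn : n ≠ 0) :
    ∫ x in Set.Ioc (0 : ℝ) (0 + 1), (𝐞 (-(x * n)) : ℂ) = 0 := by
  have hc : -(2 * Real.pi * n * Complex.I) ≠ 0 := by simp [hn, Real.pi_ne_zero]
  have hexp : ∀ x : ℝ, (𝐞 (-(x * n)) : ℂ) = Complex.exp (-(2 * Real.pi * n * Complex.I) * x) :=
    fun x => by
      rw [Real.fourierChar_apply]
      push_cast
      ring_nf
  have hperiod : (𝐞 (-((0 + 1 : ℝ) * n)) : ℂ) = 𝐞 (-((0 : ℝ) * n)) := by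
    simp [AddChar.map_neg_eq_inv, fourierChar_intCast]
  rw [← intervalIntegral.integral_of_le (by norm_num)]
  simp only [hexp] at hperiod ⊢
  rw [integral_exp_mul_complex hc, hperiod, sub_self, zero_div]

/-- The mask polynomial `A(z) = ∑_{a ∈ A} z ^ a` of a finite set of integers. -/
noncomputable def mask (A : Finset ℤ) (z : ℂ) : ℂ := ∑ a ∈ A, z ^ a

theorem mask_fourierChar (A : Finset ℤ) (x : ℝ) :
    mask A (𝐞 x) = ∑ a : A, (𝐞 (a * x) : ℂ) := by
  rw [mask, Finset.sum_coe_sort A fun a => (𝐞 (a * x) : ℂ)]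
  refine Finset.sum_congr rfl fun a _ => ?_
  rw [← Circle.coe_zpow, ← AddChar.map_zsmul_eq_zpow, zsmul_eq_mul]

theorem mask_fourierChar_add_intCast (A : Finset ℤ) (x : ℝ) (k : ℤ) :
    mask A (𝐞 (x + k)) = mask A (𝐞 x) := by
  rw [AddChar.map_add_eq_mul, fourierChar_intCast, mul_one]

section CosetRepresentatives

variable {N : ℕ} {A : Finset ℤ} {T c : ℝ}

theorem injective_zmultiples_add_mul (hN : N ≠ 0) (hA : Set.InjOn ((↑) : ℤ → ZMod N) A)
    (hc : c ≠ 0) (hT : N * c = T) :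
    Function.Injective fun p : AddSubgroup.zmultiples T × A => (p.1 : ℝ) + p.2 * c := by
  rintro ⟨⟨_, k, rfl⟩, a, ha⟩ ⟨⟨_, l, rfl⟩, b, hb⟩ h
  have hint : k * N + a = l * N + b := by
    have : ((k * N + a : ℤ) : ℝ) * c = (l * N + b : ℤ) * c := by
      simp only [← hT, zsmul_eq_mul] at h
      push_cast
      linear_combination h
    exact_mod_cast mul_right_cancel₀ hc this
  obtain rfl : a = b := hA ha hb (by simpa using congrArg ((↑) : ℤ → ZMod N) hint)
  obtain rfl : k = l := by simpa [hN] using hint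
  rfl

theorem injective_zmultiples_one_add_mul_inv (hN : N ≠ 0) (hA : Set.InjOn ((↑) : ℤ → ZMod N) A) :
    Function.Injective fun p : AddSubgroup.zmultiples (1 : ℝ) × A => (p.1 : ℝ) + p.2 * (N : ℝ)⁻¹ :=
  injective_zmultiples_add_mul hN hA (by simp [hN]) (by simp [hN])

theorem range_zmultiples_add_mul (A : Finset ℤ) (T c : ℝ) :
    Set.range (fun p : AddSubgroup.zmultiples T × A => (p.1 : ℝ) + p.2 * c) =
      {x | ∃ t : ℤ, ∃ a ∈ A, x = T * t + a * c} := by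
  ext x
  constructor
  · rintro ⟨⟨⟨_, t, rfl⟩, a, ha⟩, rfl⟩
    exact ⟨t, a, ha, by simp [mul_comm]⟩
  · rintro ⟨t, a, ha, rfl⟩
    exact ⟨⟨⟨t • T, t, rfl⟩, a, ha⟩, by simp [mul_comm]⟩

end CosetRepresentatives

namespace Tiles1

variable {Ω : Set ℝ}

theorem sum_fourierChar_mul_fourier_indicator_eq_zero {ι : Type*} [Fintype ι] {b : ι → ℝ}
    (hΩ : MeasurableSet Ω)
    (hb : Function.Injective fun p : AddSubgroup.zmultiples (1 : ℝ) × ι => (p.1 : ℝ) + b p.2)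
    (hT : Tiles1 Ω (Set.range fun p : AddSubgroup.zmultiples (1 : ℝ) × ι => (p.1 : ℝ) + b p.2))
    {n : ℤ} (hn : n ≠ 0) :
    (∑ i, (𝐞 (-(b i * n)) : ℂ)) * 𝓕 (Ω.indicator fun _ => (1 : ℂ)) n = 0 := by
  have hperiodic : ∀ (g : AddSubgroup.zmultiples (1 : ℝ)) (x : ℝ),
      (𝐞 (-((g +ᵥ x) * n)) : ℂ) = 𝐞 (-(x * n)) := by
    rintro ⟨_, k, rfl⟩ x
    have hshift : -(((k • (1 : ℝ)) + x) * n) = ((-(k * n) : ℤ) : ℝ) + -(x * n) := by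
      push_cast
      simp only [zsmul_eq_mul]
      ring
    rw [AddSubgroup.vadd_def, vadd_eq_add, hshift, AddChar.map_add_eq_mul, fourierChar_intCast,
      one_mul]
  have hfolded := hT.sum_setIntegral_add (f := fun x => (𝐞 (-(x * n)) : ℂ)) hΩ hb
    (isAddFundamentalDomain_Ioc one_pos 0) hperiodic (Continuous.integrableOn_Ioc (by fun_prop))
  rw [integral_Ioc_fourierChar_neg_mul_int hn] at hfolded
  rw [← hfolded, Finset.sum_mul, fourier_indicator hΩ]
  refine Finset.sum_congr rfl fun i _ => ?_
  rw [← integral_const_mul]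
  refine integral_congr_ae (.of_forall fun x => ?_)
  simp only [add_mul, neg_add, AddChar.map_add_eq_mul, Circle.coe_mul, smul_eq_mul, mul_one]

variable {N : ℕ} {A B : Finset ℤ}

theorem range_zmultiples_one_add_mul_inv
    (hT : Tiles1 Ω {x | ∃ t : ℤ, ∃ a ∈ A, x = (t : ℝ) + (a : ℝ) / N}) :
    Tiles1 Ω (Set.range fun p : AddSubgroup.zmultiples (1 : ℝ) × A =>
      (p.1 : ℝ) + p.2 * (N : ℝ)⁻¹) := by
  simpa only [range_zmultiples_add_mul, one_mul, div_eq_mul_inv] using hT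

theorem fourier_indicator_eq_zero_of_mask_ne_zero (hΩ : MeasurableSet Ω) (hN : N ≠ 0)
    (hA : Set.InjOn ((↑) : ℤ → ZMod N) A)
    (hT : Tiles1 Ω {x | ∃ t : ℤ, ∃ a ∈ A, x = (t : ℝ) + (a : ℝ) / N})
    {n : ℤ} (hn : n ≠ 0) (hmask : mask A (𝐞 (-n / N)) ≠ 0) :
    𝓕 (Ω.indicator fun _ => (1 : ℂ)) n = 0 := by
  have hb := injective_zmultiples_one_add_mul_inv hN hA
  have h := sum_fourierChar_mul_fourier_indicator_eq_zero (b := fun a : A => (a : ℝ) * (N : ℝ)⁻¹)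
    hΩ hb hT.range_zmultiples_one_add_mul_inv hn
  refine (mul_eq_zero.1 h).resolve_left ?_
  have hexponent : ∀ a : ℝ, -(a * (N : ℝ)⁻¹ * n) = a * (-n / N) := fun a => by ring
  simpa only [hexponent, ← mask_fourierChar] using hmask

theorem card_mul_volume_eq_one (hΩ : MeasurableSet Ω) (hN : N ≠ 0)
    (hA : Set.InjOn ((↑) : ℤ → ZMod N) A)
    (hT : Tiles1 Ω {x | ∃ t : ℤ, ∃ a ∈ A, x = (t : ℝ) + (a : ℝ) / N}) :
    A.card * volume Ω = 1 := by
  have hb := injective_zmultiples_one_add_mul_inv hN hA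
  rw [← Fintype.card_coe, card_mul_volume (b := fun a : A => (a : ℝ) * (N : ℝ)⁻¹) hΩ hb
    hT.range_zmultiples_one_add_mul_inv (isAddFundamentalDomain_Ioc one_pos 0), Real.volume_Ioc]
  simp

open scoped ComplexInnerProductSpace in
theorem pairwise_inner_expLp_eq_zero [IsFiniteMeasure (volume.restrict Ω)] (hΩ : MeasurableSet Ω)
    (hN : N ≠ 0) (hA : Set.InjOn ((↑) : ℤ → ZMod N) A) (hB : Set.InjOn ((↑) : ℤ → ZMod N) B)
    (hmask : ∀ b ∈ B, ∀ b' ∈ B, mask A (𝐞 ((b - b') / N)) ≠ 0)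
    (hT : Tiles1 Ω {x | ∃ t : ℤ, ∃ a ∈ A, x = (t : ℝ) + (a : ℝ) / N}) :
    Pairwise fun p q : AddSubgroup.zmultiples (N : ℝ) × B =>
      ⟪expLp Ω (p.1 + p.2), expLp Ω (q.1 + q.2)⟫ = 0 := by
  have hinj := injective_zmultiples_add_mul hN hB one_ne_zero (mul_one (N : ℝ))
  rintro ⟨⟨_, k, rfl⟩, b, hb⟩ ⟨⟨_, l, rfl⟩, b', hb'⟩ hpq
  have hcast : (k • (N : ℝ) + b) - (l • (N : ℝ) + b') = ((k * N + b - (l * N + b') : ℤ) : ℝ) := by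
    push_cast
    simp only [zsmul_eq_mul]
  have hne : k * N + b - (l * N + b') ≠ 0 := fun h => by
    rw [h, Int.cast_zero, sub_eq_zero] at hcast
    exact hpq (hinj (by simpa using hcast))
  rw [inner_expLp_expLp hΩ]
  refine hcast ▸ hT.fourier_indicator_eq_zero_of_mask_ne_zero hΩ hN hA hne ?_
  have hresidue : -((k * N + b - (l * N + b') : ℤ) : ℝ) / N = (b' - b) / N + (l - k : ℤ) := by
    push_cast
    field_simp
    ring
  rw [hresidue, mask_fourierChar_add_intCast]
  exact hmask b' hb' b hb

theorem isSpectrum1_of_mask_ne_zero (hΩ : MeasurableSet Ω) (hN : N ≠ 0)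
    (hcard : A.card * B.card = N) (hA : Set.InjOn ((↑) : ℤ → ZMod N) A)
    (hB : Set.InjOn ((↑) : ℤ → ZMod N) B)
    (hmask : ∀ b ∈ B, ∀ b' ∈ B, mask A (𝐞 ((b - b') / N)) ≠ 0)
    (hT : Tiles1 Ω {x | ∃ t : ℤ, ∃ a ∈ A, x = (t : ℝ) + (a : ℝ) / N}) :
    IsSpectrum1 Ω {x | ∃ t : ℤ, ∃ b ∈ B, x = N * (t : ℝ) + (b : ℝ)} := by
  have hvol := hT.card_mul_volume_eq_one hΩ hN hA
  have hΩ₀ : volume Ω ≠ 0 := fun h => by simp [h] at hvol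
  have hA₀ : A.card ≠ 0 := fun h => by simp [h] at hvol
  have hΩ_top : volume Ω ≠ ⊤ := fun h => by simp [h, hA₀] at hvol
  have : IsFiniteMeasure (volume.restrict Ω) := isFiniteMeasure_restrict.2 hΩ_top
  have horth := hT.pairwise_inner_expLp_eq_zero hΩ hN hA hB hmask
  have hdensity : (Fintype.card B : ℝ≥0∞) = volume (Set.Ioc (0 : ℝ) (0 + N)) * volume Ω := by
    rw [Real.volume_Ioc, zero_add, sub_zero, ENNReal.ofReal_natCast, ← hcard, Nat.cast_mul,
      mul_right_comm, hvol, one_mul, Fintype.card_coe]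
  have hae := ae_expLp_mem_topologicalClosure_span (a := fun b : B => (b : ℝ)) hΩ hΩ₀
    (isAddFundamentalDomain_Ioc (Nat.cast_pos.2 hN.bot_lt) 0) horth hdensity
  have hrange := range_zmultiples_add_mul B N 1
  simp only [mul_one] at hrange
  exact hrange ▸ isSpectrum1_range horth (topologicalClosure_eq_top_of_ae_expLp_mem hΩ hae)

end Tiles1

section GeometricSums

theorem pow_eq_one_and_ne_one_of_geom_sum_eq_zero {K : Type*} [Ring K] [CharZero K] {n : ℕ}
    (hn : n ≠ 0) {z : K} (h : ∑ i ∈ Finset.range n, z ^ i = 0) : z ^ n = 1 ∧ z ≠ 1 := by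
  refine ⟨?_, ?_⟩
  · rw [← sub_eq_zero, ← geom_sum_mul, h, zero_mul]
  · rintro rfl
    simp [hn] at h

theorem geom_sum_fourierChar_ne_zero {p : ℕ} (hp : p ≠ 0) {n : ℤ}
    (hdvd : (p : ℤ) ∣ n → (p : ℤ) ^ 2 ∣ n) :
    ∑ i ∈ Finset.range p, (𝐞 (n / p ^ 2) : ℂ) ^ i ≠ 0 := fun h => by
  have hp' : (p : ℝ) ≠ 0 := Nat.cast_ne_zero.2 hp
  obtain ⟨hpow, hne⟩ := pow_eq_one_and_ne_one_of_geom_sum_eq_zero hp h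
  have hp_dvd : (p : ℤ) ∣ n := by
    rw [← Circle.coe_pow, Circle.coe_eq_one, ← AddChar.map_nsmul_eq_pow,
      fourierChar_eq_one_iff] at hpow
    obtain ⟨k, hk⟩ := hpow
    refine ⟨k, ?_⟩
    have : (n : ℝ) = p * k := by
      rw [hk, nsmul_eq_mul]
      field_simp
    exact_mod_cast this
  obtain ⟨k, rfl⟩ := hdvd hp_dvd
  refine hne (Circle.coe_eq_one.2 (fourierChar_eq_one_iff.2 ⟨k, ?_⟩))
  push_cast
  field_simp

theorem geom_sum_fourierChar_pow_ne_zero {N p m : ℕ} (hN : N ≠ 0) (hm : m * p ^ 2 = N) {n : ℤ}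
    (hdvd : (p : ℤ) ∣ n → (p : ℤ) ^ 2 ∣ n) :
    ∑ i ∈ Finset.range p, ((𝐞 (n / N) : ℂ) ^ m) ^ i ≠ 0 := by
  have hm₀ : m ≠ 0 := by rintro rfl; simp [← hm] at hN
  have hp₀ : p ≠ 0 := by rintro rfl; simp [← hm] at hN
  have hpow : (𝐞 (n / N) : ℂ) ^ m = 𝐞 (n / p ^ 2) := by
    rw [← Circle.coe_pow, ← AddChar.map_nsmul_eq_pow, nsmul_eq_mul, ← hm]
    congr 2
    push_cast
    field_simp
  rw [hpow]
  exact geom_sum_fourierChar_ne_zero hp₀ hdvd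

end GeometricSums

theorem exists_of_mem_tijA {a : ℤ} (ha : a ∈ tijA) : ∃ i j k : ℕ,
    i < 5 ∧ j < 3 ∧ k < 2 ∧ a = 36 * i + 100 * j + 225 * k := by
  simp only [tijA, Finset.mem_image, Finset.mem_product, Finset.mem_range, Prod.exists] at ha
  obtain ⟨i, j, k, ⟨hi, hj, hk⟩, rfl⟩ := ha
  exact ⟨i, j, k, hi, hj, hk, rfl⟩

theorem card_tijA : tijA.card = 30 := by decide

theorem injOn_intCast_tijA : Set.InjOn ((↑) : ℤ → ZMod 900) tijA := by
  intro a ha b hb hab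
  obtain ⟨i, j, k, hi, hj, hk, rfl⟩ := exists_of_mem_tijA ha
  obtain ⟨i', j', k', hi', hj', hk', rfl⟩ := exists_of_mem_tijA hb
  have hdvd := (ZMod.intCast_eq_intCast_iff_dvd_sub _ _ 900).1 hab
  lia

theorem mask_tijA (z : ℂ) : mask tijA z =
    (∑ i ∈ Finset.range 5, (z ^ 36) ^ i) * (∑ j ∈ Finset.range 3, (z ^ 100) ^ j) *
      ∑ k ∈ Finset.range 2, (z ^ 225) ^ k := by
  have hinj := Finset.card_image_iff.1 (card_tijA.trans (by decide :
    30 = (Finset.range 5 ×ˢ Finset.range 3 ×ˢ Finset.range 2).card))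
  rw [mask, tijA, Finset.sum_image hinj, Finset.sum_mul_sum, Finset.sum_mul]
  simp only [Finset.sum_product, Finset.sum_mul_sum]
  refine Finset.sum_congr rfl fun i _ => Finset.sum_congr rfl fun j _ =>
    Finset.sum_congr rfl fun k _ => ?_
  norm_cast
  ring

theorem mask_tijA_fourierChar_sub_ne_zero {a b : ℤ} (ha : a ∈ tijA) (hb : b ∈ tijA) :
    mask tijA (𝐞 ((a - b) / (900 : ℕ))) ≠ 0 := by
  obtain ⟨i, j, k, hi, hj, hk, rfl⟩ := exists_of_mem_tijA ha
  obtain ⟨i', j', k', hi', hj', hk', rfl⟩ := exists_of_mem_tijA hb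
  rw [← Int.cast_sub, mask_tijA]
  -- `36, 100, 225` are `900 / p ^ 2` for `p = 5, 3, 2`; if `p` divides the difference, then the
  -- digits belonging to `p` agree, so `p ^ 2` divides it.
  exact mul_ne_zero (mul_ne_zero
    (geom_sum_fourierChar_pow_ne_zero (by norm_num) (by norm_num) (by lia))
    (geom_sum_fourierChar_pow_ne_zero (by norm_num) (by norm_num) (by lia)))
    (geom_sum_fourierChar_pow_ne_zero (by norm_num) (by norm_num) (by lia))

/-- `Λ_A = 900ℤ + A` is a universal spectrum for the tiling set `𝒯_A = ℤ + (1/900)A`: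
every measurable `Ω ⊆ ℝ` of finite positive measure that tiles `ℝ` by `𝒯_A` has
`Λ_A` as a spectrum. -/
theorem stmt10 :
    ∀ Ω : Set ℝ, MeasurableSet Ω → 0 < volume Ω → volume Ω < ⊤ →
      Tiles1 Ω {x : ℝ | ∃ t : ℤ, ∃ a ∈ tijA, x = (t : ℝ) + (a : ℝ) / 900} →
      IsSpectrum1 Ω {x : ℝ | ∃ t : ℤ, ∃ a ∈ tijA, x = 900 * (t : ℝ) + (a : ℝ)} := by
  intro Ω hΩ _ _ hT
  have hmask : ∀ a ∈ tijA, ∀ b ∈ tijA, mask tijA (𝐞 ((a - b) / (900 : ℕ))) ≠ 0 :=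
    fun _ ha _ hb => mask_tijA_fourierChar_sub_ne_zero ha hb
  have hcard : tijA.card * tijA.card = 900 := by rw [card_tijA]
  exact Tiles1.isSpectrum1_of_mask_ne_zero hΩ (by norm_num) hcard
    injOn_intCast_tijA injOn_intCast_tijA hmask (by exact_mod_cast hT)
end
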